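/- Under hypotheses (H0)–(H3), the Markov operator P possesses a unique invariant probability measure μ* (i.e. μ*P = μ*), this measure is ergodic, and μ* has finite first moment, i.e. μ* ∈ M_{1,1}. -/

import Mathlib

open MeasureTheory ProbabilityTheory Filter Bornology
open scoped ENNReal NNReal Topology

variable {E : Type*} [MeasurableSpace E] [MetricSpace E] [CompleteSpace E]
  [SecondCountableTopology E] [BorelSpace E]

/-- The Markov operator acting on functions: `Pf(x) = ∫ f(y) π(x, dy)`. -/
noncomputable def Pfun (π : Kernel E E) (f : E → ℝ) : E → ℝ := fun x => ∫ y, f y ∂(π x)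

/-- The Markov operator acting on measures (the transfer operator `ν ↦ νP`). -/
noncomputable def Pmeas (π : Kernel E E) (ν : MeasureTheory.Measure E) :
    MeasureTheory.Measure E := ν.bind (fun x => π x)

/-- `ν ∈ M_{1,1}`: a Borel probability measure with finite first moment. -/
def FiniteFirstMoment (ν : MeasureTheory.Measure E) : Prop :=
  IsProbabilityMeasure ν ∧ ∃ x₀ : E, Integrable (fun x => dist x₀ x) ν

/-- The Wasserstein (dual-Lipschitz) distance between two measures. -/
noncomputable def wassDist (ν₁ ν₂ : MeasureTheory.Measure E) : ℝ :=
  sSup {r : ℝ | ∃ f : E → ℝ, LipschitzWith 1 f ∧ r = |∫ x, f x ∂ν₁ - ∫ x, f x ∂ν₂|}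

/-- The natural filtration of the coordinate process on `ℕ → E`. -/
def natFilt : Filtration ℕ (MeasurableSpace.pi : MeasurableSpace (ℕ → E)) :=
  Filtration.natural (fun k (ω : ℕ → E) => ω k)
    (fun k => (measurable_pi_apply k).stronglyMeasurable)

/-- `ℙ` is the law of the Markov chain on `E^ℕ` with transition probability `π` and
initial distribution `ν`. -/
structure IsMarkovChainLaw (π : Kernel E E) (ν : MeasureTheory.Measure E)
    (P : MeasureTheory.Measure (ℕ → E)) : Prop where
  prob : IsProbabilityMeasure P
  init : P.map (fun ω => ω 0) = ν
  markov : ∀ (n : ℕ) (g : E → ℝ), Measurable g → IsBounded (Set.range g) →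
    P[(fun ω => g (ω (n + 1))) | natFilt n] =ᵐ[P] fun ω => ∫ y, g y ∂(π (ω n))

/-- The corrector function `χ = ∑_{i≥0} Pⁱψ`. -/
noncomputable def chiFun (π : Kernel E E) (ψ : E → ℝ) : E → ℝ :=
  fun x => ∑' i : ℕ, (Pfun π)^[i] ψ x

/-- The martingale `S_n = χ(X_n) - χ(X_0) + ∑_{i=0}^n ψ(X_i)` as a function of the trajectory. -/
noncomputable def SFun (π : Kernel E E) (ψ : E → ℝ) (n : ℕ) : (ℕ → E) → ℝ :=
  fun ω => chiFun π ψ (ω n) - chiFun π ψ (ω 0) + ∑ i ∈ Finset.range (n + 1), ψ (ω i)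

/-- The martingale differences `Z_n = χ(X_n) - χ(X_{n-1}) + ψ(X_n)`. -/
noncomputable def ZFun (π : Kernel E E) (ψ : E → ℝ) (n : ℕ) : (ℕ → E) → ℝ :=
  fun ω => chiFun π ψ (ω n) - chiFun π ψ (ω (n - 1)) + ψ (ω n)

set_option linter.unusedSectionVars false
open scoped BoundedContinuousFunction

lemma ffm_lip_integrable {ν : Measure E} (h : FiniteFirstMoment ν) {f : E → ℝ}
    (hf : LipschitzWith 1 f) : Integrable f ν := by
  obtain ⟨hp, x₀, hx⟩ := h
  have hi : Integrable (fun x => |f x₀| + dist x₀ x) ν := (integrable_const _).add hx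
  refine hi.mono' hf.continuous.aestronglyMeasurable (ae_of_all _ fun x => ?_)
  have h1 := hf.dist_le_mul x₀ x
  rw [Real.dist_eq] at h1
  rw [Real.norm_eq_abs]
  have h2 : |f x| ≤ |f x₀| + |f x₀ - f x| := by
    have := abs_sub (f x₀) (f x₀ - f x)
    simpa using this
  simp at h1
  linarith

lemma wass_bdd {ν₁ ν₂ : Measure E} (h₁ : FiniteFirstMoment ν₁) (h₂ : FiniteFirstMoment ν₂) :
    BddAbove {r : ℝ | ∃ f : E → ℝ, LipschitzWith 1 f ∧
      r = |∫ x, f x ∂ν₁ - ∫ x, f x ∂ν₂|} := by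
  obtain ⟨x₀, hx⟩ := h₁.2
  have := h₁.1
  have := h₂.1
  have hx2 : Integrable (fun x => dist x₀ x) ν₂ :=
    ffm_lip_integrable h₂ (LipschitzWith.dist_right x₀)
  refine ⟨∫ x, dist x₀ x ∂ν₁ + ∫ x, dist x₀ x ∂ν₂, ?_⟩
  rintro r ⟨f, hf, rfl⟩
  have key : ∀ ν : Measure E, FiniteFirstMoment ν → |∫ x, f x ∂ν - f x₀| ≤ ∫ x, dist x₀ x ∂ν := by
    intro ν hν
    have := hν.1
    have hfi := ffm_lip_integrable hν hf
    have e : ∫ x, f x ∂ν - f x₀ = ∫ x, (f x - f x₀) ∂ν := by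
      rw [integral_sub hfi (integrable_const _)]; simp
    rw [e]
    refine (abs_integral_le_integral_abs).trans ?_
    refine integral_mono (hfi.sub (integrable_const _)).abs
      (ffm_lip_integrable hν (LipschitzWith.dist_right x₀)) fun x => ?_
    have h1 := hf.dist_le_mul x x₀
    rw [Real.dist_eq] at h1
    simpa [dist_comm] using h1
  have a := key ν₁ h₁
  have b := key ν₂ h₂
  rw [abs_le] at *
  constructor <;> linarith [a.1, a.2, b.1, b.2]

lemma wass_ge {ν₁ ν₂ : Measure E} (h₁ : FiniteFirstMoment ν₁) (h₂ : FiniteFirstMoment ν₂)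
    {f : E → ℝ} (hf : LipschitzWith 1 f) :
    |∫ x, f x ∂ν₁ - ∫ x, f x ∂ν₂| ≤ wassDist ν₁ ν₂ :=
  le_csSup (wass_bdd h₁ h₂) ⟨f, hf, rfl⟩

lemma wass_nonneg (ν₁ ν₂ : Measure E) : 0 ≤ wassDist ν₁ ν₂ := by
  apply Real.sSup_nonneg
  rintro r ⟨f, _, rfl⟩
  exact abs_nonneg _

lemma ffm_iter {π : Kernel E E}
    (hH1 : ∀ ν : Measure E, FiniteFirstMoment ν → FiniteFirstMoment (Pmeas π ν))
    {ν : Measure E} (h : FiniteFirstMoment ν) (n : ℕ) : FiniteFirstMoment ((Pmeas π)^[n] ν) := by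
  induction n with
  | zero => exact h
  | succ n ih => rw [Function.iterate_succ_apply']; exact hH1 _ ih

lemma ffm_dirac (x : E) : FiniteFirstMoment (Measure.dirac x) :=
  ⟨inferInstance, x, by
    refine ⟨(by fun_prop : Continuous fun y => dist x y).aestronglyMeasurable, ?_⟩
    rw [HasFiniteIntegral, lintegral_dirac]; simp⟩

/-- Feller property. -/
def FellerOp (π : Kernel E E) : Prop :=
  ∀ f : E → ℝ, Continuous f → IsBounded (Set.range f) → Continuous (Pfun π f)

lemma Pfun_bound (π : Kernel E E) [IsMarkovKernel π] (f : E →ᵇ ℝ) (x : E) :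
    ‖Pfun π f x‖ ≤ ‖f‖ := by
  have := norm_integral_le_of_norm_le_const (μ := π x) (f := f) (ae_of_all _ f.norm_coe_le_norm)
  simpa [Pfun] using this

/-- The Markov operator on bounded continuous functions. -/
noncomputable def PB (π : Kernel E E) [IsMarkovKernel π] (h0 : FellerOp π) (f : E →ᵇ ℝ) :
    E →ᵇ ℝ :=
  BoundedContinuousFunction.ofNormedAddCommGroup (Pfun π f)
    (h0 f f.continuous f.isBounded_range) ‖f‖ (Pfun_bound π f)

lemma PB_apply (π : Kernel E E) [IsMarkovKernel π] (h0 : FellerOp π) (f : E →ᵇ ℝ) (x : E) :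
    PB π h0 f x = ∫ y, f y ∂(π x) := rfl

lemma PB_norm (π : Kernel E E) [IsMarkovKernel π] (h0 : FellerOp π) (f : E →ᵇ ℝ) :
    ‖PB π h0 f‖ ≤ ‖f‖ :=
  (BoundedContinuousFunction.norm_le (norm_nonneg _)).2 (Pfun_bound π f)

lemma PB_iter_norm (π : Kernel E E) [IsMarkovKernel π] (h0 : FellerOp π) (f : E →ᵇ ℝ) (n : ℕ) :
    ‖(PB π h0)^[n] f‖ ≤ ‖f‖ := by
  induction n with
  | zero => simp
  | succ n ih => rw [Function.iterate_succ_apply']; exact (PB_norm _ _ _).trans ih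

instance Pmeas_prob (π : Kernel E E) [IsMarkovKernel π] (ν : Measure E) [IsProbabilityMeasure ν] :
    IsProbabilityMeasure (Pmeas π ν) := by
  unfold Pmeas; infer_instance

lemma Pmeas_iter_prob (π : Kernel E E) [IsMarkovKernel π] (ν : Measure E) [IsProbabilityMeasure ν]
    (n : ℕ) : IsProbabilityMeasure ((Pmeas π)^[n] ν) := by
  induction n with
  | zero => simpa
  | succ n ih => rw [Function.iterate_succ_apply']; infer_instance

lemma integral_Pmeas (π : Kernel E E) [IsMarkovKernel π] (h0 : FellerOp π) (ν : Measure E)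
    [IsProbabilityMeasure ν] (f : E →ᵇ ℝ) : ∫ x, f x ∂(Pmeas π ν) = ∫ x, PB π h0 f x ∂ν := by
  have e : Pmeas π ν = (π ∘ₖ Kernel.const Unit ν) () := by
    rw [Kernel.comp_apply]; rfl
  have hp : IsProbabilityMeasure (Pmeas π ν) := inferInstance
  have hi : Integrable f (Pmeas π ν) := f.integrable _
  rw [e] at hi ⊢
  rw [Kernel.integral_comp hi]
  simp [PB_apply]

lemma integral_Pmeas_iter (π : Kernel E E) [IsMarkovKernel π] (h0 : FellerOp π) (ν : Measure E)
    [IsProbabilityMeasure ν] (f : E →ᵇ ℝ) (n : ℕ) :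
    ∫ x, f x ∂((Pmeas π)^[n] ν) = ∫ x, (PB π h0)^[n] f x ∂ν := by
  induction n generalizing f with
  | zero => rfl
  | succ n ih =>
    have := Pmeas_iter_prob π ν n
    rw [Function.iterate_succ_apply', integral_Pmeas π h0, ih, Function.iterate_succ_apply]

lemma lip_tendsto_of_wass {ν ρ : ℕ → Measure E} {w : ℕ → ℝ}
    (hw : Tendsto w atTop (𝓝 0))
    (h : ∀ n, ∀ f : E → ℝ, LipschitzWith 1 f → |∫ x, f x ∂(ν n) - ∫ x, f x ∂(ρ n)| ≤ w n)
    {f : E → ℝ} {L : ℝ≥0} (hf : LipschitzWith L f) :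
    Tendsto (fun n => ∫ x, f x ∂(ν n) - ∫ x, f x ∂(ρ n)) atTop (𝓝 0) := by
  have hL : (0:ℝ) < L + 1 := by positivity
  have hg : LipschitzWith 1 (fun x => (L + 1 : ℝ)⁻¹ * f x) := by
    refine LipschitzWith.of_dist_le_mul fun x y => ?_
    rw [Real.dist_eq, ← mul_sub, abs_mul, abs_of_pos (inv_pos.2 hL), ← Real.dist_eq]
    have := hf.dist_le_mul x y
    simp only [NNReal.coe_one, one_mul]
    rw [inv_mul_le_iff₀ hL]
    nlinarith [dist_nonneg (x := x) (y := y)]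
  have key : Tendsto (fun n => ∫ x, (L + 1 : ℝ)⁻¹ * f x ∂(ν n)
      - ∫ x, (L + 1 : ℝ)⁻¹ * f x ∂(ρ n)) atTop (𝓝 0) :=
    squeeze_zero_norm (fun n => h n _ hg) hw
  simp only [integral_const_mul, ← mul_sub] at key
  have := key.const_mul (L + 1 : ℝ)
  simpa [← mul_assoc, hL.ne'] using this

lemma coord_sm (n : ℕ) (g : E →ᵇ ℝ) :
    StronglyMeasurable[natFilt (E := E) n] (fun ω : ℕ → E => g (ω n)) := by
  have h1 : Measurable[natFilt (E := E) n] (fun ω : ℕ → E => ω n) := by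
    have h2 : MeasurableSpace.comap (fun ω : ℕ → E => ω n) inferInstance ≤ natFilt (E := E) n :=
      le_iSup₂_of_le (f := fun j (_ : j ≤ n) =>
        MeasurableSpace.comap (fun ω : ℕ → E => ω j) inferInstance) n le_rfl le_rfl
    exact (comap_measurable _).mono h2 le_rfl
  exact (g.continuous.measurable.comp h1).stronglyMeasurable

lemma natFilt_iSup : (⨆ n, natFilt (E := E) n) = (MeasurableSpace.pi : MeasurableSpace (ℕ → E)) := by
  apply le_antisymm
  · exact iSup_le fun n => (natFilt (E := E)).le n
  · refine iSup_le fun n => ?_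
    refine le_trans ?_ (le_iSup _ n)
    exact le_iSup₂_of_le (f := fun j (_ : j ≤ n) =>
        MeasurableSpace.comap (fun ω : ℕ → E => ω j) inferInstance) n le_rfl le_rfl

lemma coord_meas (n : ℕ) (g : E →ᵇ ℝ) : Measurable (fun ω : ℕ → E => g (ω n)) :=
  g.continuous.measurable.comp (measurable_pi_apply n)

lemma markov_step {π : Kernel E E} [IsMarkovKernel π] (h0 : FellerOp π) {ν : Measure E}
    {P : Measure (ℕ → E)} (h : IsMarkovChainLaw π ν P) (n : ℕ) {F : (ℕ → E) → ℝ}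
    (hF : StronglyMeasurable[natFilt (E := E) n] F) {C : ℝ} (hC : ∀ᵐ ω ∂P, ‖F ω‖ ≤ C)
    (g : E →ᵇ ℝ) :
    ∫ ω, F ω * g (ω (n + 1)) ∂P = ∫ ω, F ω * PB π h0 g (ω n) ∂P := by
  have := h.prob
  have hg : Integrable (fun ω : ℕ → E => g (ω (n + 1))) P :=
    Integrable.of_bound (coord_meas _ g).aestronglyMeasurable ‖g‖
      (ae_of_all _ fun ω => g.norm_coe_le_norm _)
  have e1 := condExp_stronglyMeasurable_mul_of_bound ((natFilt (E := E)).le n) hF hg C hC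
  have e2 := h.markov n g g.continuous.measurable g.isBounded_range
  rw [← integral_condExp ((natFilt (E := E)).le n)]
  refine integral_congr_ae ?_
  refine EventuallyEq.trans e1 ?_
  filter_upwards [e2] with ω hω
  simp only [Pi.mul_apply, hω, PB_apply]

lemma markov_iter {π : Kernel E E} [IsMarkovKernel π] (h0 : FellerOp π) {ν : Measure E}
    {P : Measure (ℕ → E)} (h : IsMarkovChainLaw π ν P) (k : ℕ) {F : (ℕ → E) → ℝ}
    (hF : StronglyMeasurable[natFilt (E := E) k] F) {C : ℝ} (hC : ∀ᵐ ω ∂P, ‖F ω‖ ≤ C)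
    (g : E →ᵇ ℝ) (m : ℕ) :
    ∫ ω, F ω * g (ω (k + m)) ∂P = ∫ ω, F ω * (PB π h0)^[m] g (ω k) ∂P := by
  induction m generalizing g with
  | zero => rfl
  | succ m ih =>
    rw [Function.iterate_succ_apply, ← ih, ← add_assoc]
    exact markov_step h0 h (k + m) (hF.mono ((natFilt (E := E)).mono (by omega))) hC g

/-- `gB f N x = E_x ∏_{i<N} f_i(X_i)`. -/
noncomputable def gB (π : Kernel E E) [IsMarkovKernel π] (h0 : FellerOp π) :
    (ℕ → (E →ᵇ ℝ)) → ℕ → (E →ᵇ ℝ)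
  | _, 0 => 1
  | f, N + 1 => f 0 * PB π h0 (gB π h0 (fun i => f (i + 1)) N)

lemma markov_prod {π : Kernel E E} [IsMarkovKernel π] (h0 : FellerOp π) {ν : Measure E}
    {P : Measure (ℕ → E)} (h : IsMarkovChainLaw π ν P) (N : ℕ) (f : ℕ → (E →ᵇ ℝ)) (n : ℕ)
    {F : (ℕ → E) → ℝ}
    (hF : StronglyMeasurable[natFilt (E := E) n] F) {C : ℝ} (hC : ∀ᵐ ω ∂P, ‖F ω‖ ≤ C) :
    ∫ ω, F ω * ∏ i ∈ Finset.range N, f i (ω (n + i)) ∂P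
      = ∫ ω, F ω * gB π h0 f N (ω n) ∂P := by
  induction N generalizing f n F C with
  | zero => simp [gB]
  | succ N ih =>
    have hF' : StronglyMeasurable[natFilt (E := E) n] (fun ω => F ω * f 0 (ω n)) :=
      hF.mul (coord_sm n (f 0))
    have hC' : ∀ᵐ ω ∂P, ‖F ω * f 0 (ω n)‖ ≤ C * ‖f 0‖ := by
      filter_upwards [hC] with ω hω
      rw [norm_mul]
      exact mul_le_mul hω ((f 0).norm_coe_le_norm _) (norm_nonneg _) ((norm_nonneg _).trans hω)
    have h1 := ih (fun i => f (i + 1)) (n + 1)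
      (hF'.mono ((natFilt (E := E)).mono (Nat.le_succ n))) hC'
    have h2 := markov_step h0 h n hF' hC' (gB π h0 (fun i => f (i + 1)) N)
    calc _ = ∫ ω, (F ω * f 0 (ω n)) * ∏ i ∈ Finset.range N, f (i + 1) (ω (n + 1 + i)) ∂P := by
          congr 1; ext ω
          rw [Finset.prod_range_succ', mul_assoc, mul_comm (f 0 (ω n))]
          simp only [add_zero]
          congr 3; ext i; congr 2; omega
      _ = _ := h1
      _ = _ := h2
      _ = _ := by
          congr 1; ext ω; simp [gB, mul_assoc]

lemma path_ext {μ ν : Measure (ℕ → E)} [IsFiniteMeasure μ] [IsFiniteMeasure ν]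
    (h : ∀ (f : ℕ → (E →ᵇ ℝ)) (N : ℕ), ∫ ω, ∏ i ∈ Finset.range N, f i (ω i) ∂μ
      = ∫ ω, ∏ i ∈ Finset.range N, f i (ω i) ∂ν) : μ = ν := by
  classical
  have hlim : IsProjectiveLimit μ (fun I => ν.map I.restrict) := by
    intro I
    have hr : Measurable (I.restrict (π := fun _ : ℕ => E)) := Finset.measurable_restrict I
    have hinj : (μ.map I.restrict).map (fun x => (x, ())) =
        (ν.map I.restrict).map (fun x => (x, ())) := by
      refine Measure.ext_of_integral_prod_mul_boundedContinuousFunction fun f g => ?_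
      have hm : ∀ ρ : Measure (ℕ → E), ∫ p, (∏ i, f i (p.1 i)) * g p.2
          ∂((ρ.map I.restrict).map (fun x => (x, ()))) =
          (∫ ω, ∏ i : I, f i (ω i) ∂ρ) * g () := by
        intro ρ
        have hmeas : Measurable fun p : (I → E) × Unit => (∏ i, f i (p.1 i)) * g p.2 := by
          refine Measurable.mul (Finset.measurable_prod _ fun i _ => ?_) ?_
          · exact (f i).continuous.measurable.comp ((measurable_pi_apply i).comp measurable_fst)
          · exact g.continuous.measurable.comp measurable_snd
        rw [integral_map (by fun_prop) hmeas.aestronglyMeasurable, integral_map hr.aemeasurable]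
        · exact integral_mul_const (g ()) (fun ω : ℕ → E => ∏ i : I, f i (ω i))
        · exact (hmeas.comp measurable_prodMk_right).aestronglyMeasurable
      rw [hm, hm]
      congr 1
      let f' : ℕ → (E →ᵇ ℝ) := fun i => if hi : i ∈ I then f ⟨i, hi⟩ else 1
      have := h f' (I.sup id + 1)
      have e : ∀ ω : ℕ → E, ∏ i : I, f i (ω i) = ∏ i ∈ Finset.range (I.sup id + 1), f' i (ω i) := by
        intro ω
        have hsub : I ⊆ Finset.range (I.sup id + 1) := fun i hi => by
          rw [Finset.mem_range]
          exact Nat.lt_succ_of_le (Finset.le_sup (f := id) hi)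
        rw [← Finset.prod_subset hsub (f := fun i => f' i (ω i)),
          ← Finset.prod_coe_sort I (fun i => f' i (ω i))]
        · refine Finset.prod_congr rfl fun i _ => ?_
          simp [f']
        · intro i _ hi
          simp [f', hi]
      simp only [e]
      exact this
    have hfst : ∀ ρ : Measure (I → E), (ρ.map (fun x => (x, ()))).map Prod.fst = ρ := by
      intro ρ
      rw [Measure.map_map (by fun_prop) (by fun_prop)]
      exact Measure.map_id
    have := congrArg (Measure.map Prod.fst) hinj
    rwa [hfst, hfst] at this
  exact hlim.unique (fun I => rfl)

/-- The shift. -/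
def shiftMap (E : Type*) : (ℕ → E) → (ℕ → E) := fun ω n => ω (n + 1)

lemma shift_meas : Measurable (shiftMap E) :=
  measurable_pi_lambda _ fun n => measurable_pi_apply (n + 1)

lemma prod_meas (f : ℕ → (E →ᵇ ℝ)) (n N : ℕ) :
    Measurable (fun ω : ℕ → E => ∏ i ∈ Finset.range N, f i (ω (n + i))) :=
  Finset.measurable_prod _ fun i _ => coord_meas _ (f i)

lemma prod_bound (f : ℕ → (E →ᵇ ℝ)) (n N : ℕ) (ω : ℕ → E) :
    ‖∏ i ∈ Finset.range N, f i (ω (n + i))‖ ≤ ∏ i ∈ Finset.range N, ‖f i‖ := by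
  rw [norm_prod]
  exact Finset.prod_le_prod (fun _ _ => norm_nonneg _) fun i _ => (f i).norm_coe_le_norm _

lemma integral_init {π : Kernel E E} {ν : Measure E}
    {P : Measure (ℕ → E)} (h : IsMarkovChainLaw π ν P) (g : E →ᵇ ℝ) :
    ∫ ω, g (ω 0) ∂P = ∫ x, g x ∂ν := by
  rw [← h.init, integral_map (measurable_pi_apply 0).aemeasurable
    g.continuous.aestronglyMeasurable]

lemma integral_prod_eq {π : Kernel E E} [IsMarkovKernel π] (h0 : FellerOp π) {ν : Measure E}
    {P : Measure (ℕ → E)} (h : IsMarkovChainLaw π ν P) (f : ℕ → (E →ᵇ ℝ)) (N : ℕ) :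
    ∫ ω, ∏ i ∈ Finset.range N, f i (ω i) ∂P = ∫ x, gB π h0 f N x ∂ν := by
  have h1 := markov_prod h0 h N f 0 (F := fun _ => 1) stronglyMeasurable_const (C := 1)
    (by simp)
  simp only [one_mul, zero_add] at h1
  rw [h1, integral_init h]

lemma shift_preserving {π : Kernel E E} [IsMarkovKernel π] (h0 : FellerOp π) {ν : Measure E}
    {P : Measure (ℕ → E)} (h : IsMarkovChainLaw π ν P) (hinv : Pmeas π ν = ν) :
    MeasurePreserving (shiftMap E) P P := by
  have hp := h.prob
  have hν : IsProbabilityMeasure ν := by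
    rw [← h.init]; exact Measure.isProbabilityMeasure_map (measurable_pi_apply 0).aemeasurable
  refine ⟨shift_meas, ?_⟩
  have : IsProbabilityMeasure (P.map (shiftMap E)) :=
    Measure.isProbabilityMeasure_map shift_meas.aemeasurable
  refine path_ext fun f N => ?_
  have hm := prod_meas f 0 N
  simp only [zero_add] at hm
  rw [integral_map shift_meas.aemeasurable hm.aestronglyMeasurable, integral_prod_eq h0 h]
  have h1 := markov_prod h0 h N f 1 (F := fun _ => 1) stronglyMeasurable_const (C := 1)
    (by simp)
  have h2 := markov_iter h0 h 0 (F := fun _ => 1) stronglyMeasurable_const (C := 1)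
    (by simp) (gB π h0 f N) 1
  simp only [one_mul, zero_add, Function.iterate_one] at h1 h2
  rw [h2, integral_init h, ← integral_Pmeas, hinv] at h1
  rw [← h1]
  simp only [shiftMap, add_comm]

lemma mixing_aux {π : Kernel E E} [IsMarkovKernel π] (h0 : FellerOp π) {ν : Measure E}
    {P : Measure (ℕ → E)} (h : IsMarkovChainLaw π ν P)
    (hconv : ∀ (g : E →ᵇ ℝ) (x : E),
      Tendsto (fun n => (PB π h0)^[n] g x) atTop (𝓝 (∫ y, g y ∂ν)))
    (k : ℕ) {F : (ℕ → E) → ℝ}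
    (hF : StronglyMeasurable[natFilt (E := E) k] F) {C : ℝ} (hC : ∀ᵐ ω ∂P, ‖F ω‖ ≤ C)
    (f : ℕ → (E →ᵇ ℝ)) (N : ℕ) :
    Tendsto (fun m => ∫ ω, F ω * ∏ i ∈ Finset.range N, f i (ω (k + m + i)) ∂P) atTop
      (𝓝 ((∫ ω, F ω ∂P) * ∫ y, gB π h0 f N y ∂ν)) := by
  have hp := h.prob
  have e : ∀ m, ∫ ω, F ω * ∏ i ∈ Finset.range N, f i (ω (k + m + i)) ∂P =
      ∫ ω, F ω * (PB π h0)^[m] (gB π h0 f N) (ω k) ∂P := fun m => by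
    rw [markov_prod h0 h N f (k + m) (hF.mono ((natFilt (E := E)).mono (by omega))) hC,
      markov_iter h0 h k hF hC]
  simp only [e]
  rw [← integral_mul_const]
  have hFm : StronglyMeasurable F := hF.mono ((natFilt (E := E)).le k)
  refine tendsto_integral_of_dominated_convergence (fun _ => C * ‖gB π h0 f N‖) ?_
    (integrable_const _) ?_ ?_
  · exact fun m => hFm.aestronglyMeasurable.mul (coord_meas _ _).aestronglyMeasurable
  · intro m
    filter_upwards [hC] with ω hω
    rw [norm_mul]
    exact mul_le_mul hω ((BoundedContinuousFunction.norm_coe_le_norm _ _).trans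
      (PB_iter_norm _ _ _ _)) (norm_nonneg _) ((norm_nonneg _).trans hω)
  · exact ae_of_all _ fun ω => (hconv _ _).const_mul _

lemma ergodic_aux {π : Kernel E E} [IsMarkovKernel π] (h0 : FellerOp π) {ν : Measure E}
    {P : Measure (ℕ → E)} (h : IsMarkovChainLaw π ν P) (hinv : Pmeas π ν = ν)
    (hconv : ∀ (g : E →ᵇ ℝ) (x : E),
      Tendsto (fun n => (PB π h0)^[n] g x) atTop (𝓝 (∫ y, g y ∂ν))) :
    Ergodic (shiftMap E) P := by
  have hmp := shift_preserving h0 h hinv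
  have hp := h.prob
  refine ⟨hmp, ⟨fun A hA hinvA => ?_⟩⟩
  set χ : (ℕ → E) → ℝ := A.indicator (fun _ => 1) with hχ
  have hχm : Measurable χ := measurable_const.indicator hA
  have hχb : ∀ ω, |χ ω| ≤ 1 := fun ω => by
    simp only [hχ, Set.indicator]; split_ifs <;> simp
  have hχi : Integrable χ P := Integrable.of_bound hχm.aestronglyMeasurable 1 (ae_of_all _ hχb)
  have hχs : ∀ ω, χ (shiftMap E ω) = χ ω := fun ω => by
    have : shiftMap E ω ∈ A ↔ ω ∈ A := by
      conv_rhs => rw [← hinvA]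
      rfl
    by_cases hω : ω ∈ A
    · simp [hχ, hω, this.2 hω]
    · simp [hχ, hω, this.not.2 hω]
  have hχint : ∫ ω, χ ω ∂P = P.real A := by
    rw [hχ, integral_indicator hA]; simp
  have key : ∀ (f : ℕ → (E →ᵇ ℝ)) (N : ℕ), ∫ ω, χ ω * ∏ i ∈ Finset.range N, f i (ω i) ∂P =
      P.real A * ∫ ω, ∏ i ∈ Finset.range N, f i (ω i) ∂P := by
    intro f N
    have hstat : ∀ n, ∫ ω, χ ω * ∏ i ∈ Finset.range N, f i (ω (n + i)) ∂P =
        ∫ ω, χ ω * ∏ i ∈ Finset.range N, f i (ω i) ∂P := by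
      intro n
      induction n with
      | zero => simp
      | succ n ih =>
        rw [← ih]
        conv_rhs => rw [← hmp.map_eq]
        have hmm : Measurable fun ω => χ ω * ∏ i ∈ Finset.range N, f i (ω (n + i)) :=
          hχm.mul (prod_meas f n N)
        rw [integral_map shift_meas.aemeasurable hmm.aestronglyMeasurable]
        refine integral_congr_ae (ae_of_all _ fun ω => ?_)
        simp only [hχs]
        congr 1
        refine Finset.prod_congr rfl fun i _ => ?_
        simp only [shiftMap]
        congr 2; omega
    set I := ∫ ω, χ ω * ∏ i ∈ Finset.range N, f i (ω i) ∂P with hI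
    set D := ∏ i ∈ Finset.range N, ‖f i‖
    have hD : 0 ≤ D := Finset.prod_nonneg fun _ _ => norm_nonneg _
    rw [integral_prod_eq h0 h]
    set G := ∫ x, gB π h0 f N x ∂ν
    have hbd : ∀ k : ℕ, |I - P.real A * G| ≤ D * ∫ ω, |(P[χ | natFilt (E := E) k]) ω - χ ω| ∂P := by
      intro k
      set F := P[χ | natFilt (E := E) k] with hFdef
      have hF : StronglyMeasurable[natFilt (E := E) k] F := stronglyMeasurable_condExp
      have hFb : ∀ᵐ ω ∂P, ‖F ω‖ ≤ 1 :=
        ae_bdd_abs_condExp_of_ae_bdd_abs (ae_of_all _ hχb)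
      have hFi : Integrable F P := integrable_condExp
      have hFint : ∫ ω, F ω ∂P = P.real A := by
        rw [hFdef, integral_condExp ((natFilt (E := E)).le k), hχint]
      have ht := mixing_aux h0 h hconv k hF hFb f N
      rw [hFint] at ht
      have ht2 : Tendsto (fun m => |I - ∫ ω, F ω * ∏ i ∈ Finset.range N, f i (ω (k + m + i)) ∂P|)
        atTop (𝓝 |I - P.real A * G|) := (tendsto_const_nhds.sub ht).abs
      refine le_of_tendsto' ht2 fun m => ?_
      rw [← hstat (k + m)]
      have hpi : ∀ ψ : (ℕ → E) → ℝ, Integrable ψ P →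
          Integrable (fun ω => ψ ω * ∏ i ∈ Finset.range N, f i (ω (k + m + i))) P := fun ψ hψ =>
        hψ.mul_bdd (c := D) (prod_meas f (k + m) N).aestronglyMeasurable
          (ae_of_all _ (prod_bound f _ N))
      rw [← integral_sub (hpi _ hχi) (hpi _ hFi), ← integral_const_mul]
      refine (abs_integral_le_integral_abs).trans (integral_mono_ae ?_ ?_ (ae_of_all _ fun ω => ?_))
      · exact ((hpi _ hχi).sub (hpi _ hFi)).abs
      · exact ((hFi.sub hχi).abs).const_mul _
      · simp only
        rw [← sub_mul, abs_mul, mul_comm, abs_sub_comm]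
        exact mul_le_mul_of_nonneg_right (prod_bound f _ N ω) (abs_nonneg _)
    have hlevy : Tendsto (fun k => ∫ ω, |(P[χ | natFilt (E := E) k]) ω - χ ω| ∂P) atTop (𝓝 0) := by
      have hsm : StronglyMeasurable[⨆ n, natFilt (E := E) n] χ := by
        rw [natFilt_iSup]; exact hχm.stronglyMeasurable
      have := hχi.tendsto_eLpNorm_condExp hsm
      have h2 := (ENNReal.tendsto_toReal ENNReal.zero_ne_top).comp this
      refine h2.congr fun k => ?_
      simp only [Function.comp]
      rw [eLpNorm_one_eq_lintegral_enorm,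
        ← integral_norm_eq_lintegral_enorm (integrable_condExp.sub hχi).aestronglyMeasurable]
      rfl
    have h3 := ge_of_tendsto' (hlevy.const_mul D) hbd
    rw [mul_zero] at h3
    exact sub_eq_zero.1 (abs_nonpos_iff.1 h3)
  have hmeq : P.restrict A = (P A) • P := by
    have : IsFiniteMeasure ((P A) • P) := P.smul_finite (measure_ne_top P A)
    refine path_ext fun f N => ?_
    rw [integral_smul_measure, ← integral_indicator hA, smul_eq_mul]
    refine Eq.trans ?_ (key f N)
    refine integral_congr_ae (ae_of_all _ fun ω => ?_)
    by_cases hω : ω ∈ A <;> simp [hχ, hω]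
  have h4 := congrArg (fun m : Measure (ℕ → E) => m Aᶜ) hmeq
  simp [Measure.restrict_apply hA.compl] at h4
  rw [eventuallyConst_set']
  rcases h4 with h5 | h5
  · left; simpa using h5
  · right; simpa using h5

lemma cover_of_wass {ν : ℕ → Measure E} [hp : ∀ n, IsProbabilityMeasure (ν n)]
    (hc : ∀ ε > 0, ∃ N, ∀ n ≥ N, ∀ f : E → ℝ, LipschitzWith 1 f →
      |∫ x, f x ∂(ν N) - ∫ x, f x ∂(ν n)| ≤ ε) {r ε : ℝ} (hr : 0 < r) (hε : 0 < ε) :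
    ∃ t : Set E, t.Finite ∧ ∀ n, ν n (⋃ x ∈ t, Metric.closedBall x r)ᶜ ≤ ENNReal.ofReal ε := by
  obtain ⟨N, hN⟩ := hc (r / 2 * (ε / 2)) (by positivity)
  have hsing : ∀ n, ∃ K : Set E, IsCompact K ∧ ν n Kᶜ ≤ ENNReal.ofReal (ε / 2) := by
    intro n
    obtain ⟨K, hK, h⟩ := isTightMeasureSet_iff_exists_isCompact_measure_compl_le.1
      (isTightMeasureSet_singleton (μ := ν n)) (ENNReal.ofReal (ε / 2)) (by simpa using hε)
    exact ⟨K, hK, h _ rfl⟩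
  choose K hK hKν using hsing
  have hne : Nonempty E := (ν 0).nonempty_of_neZero
  obtain ⟨x₀⟩ := hne
  let K' : Set E := {x₀} ∪ ⋃ n ∈ Set.Iic N, K n
  have hK' : IsCompact K' :=
    isCompact_singleton.union ((Set.finite_Iic N).isCompact_biUnion fun n _ => hK n)
  have hK'ne : K'.Nonempty := ⟨x₀, Or.inl rfl⟩
  have hK'n : ∀ n ≤ N, ν n K'ᶜ ≤ ENNReal.ofReal (ε / 2) := fun n hn =>
    (measure_mono (Set.compl_subset_compl.2 (Set.subset_union_of_subset_right
      (Set.subset_biUnion_of_mem (u := K) (show n ∈ Set.Iic N from hn)) _))).trans (hKν n)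
  obtain ⟨t, -, htf, ht⟩ := hK'.finite_cover_balls (half_pos hr)
  refine ⟨t, htf, fun n => ?_⟩
  set U := ⋃ x ∈ t, Metric.closedBall x r with hU
  rcases le_total n N with hn | hn
  · refine (measure_mono (Set.compl_subset_compl.2 ?_)).trans ((hK'n n hn).trans
      (ENNReal.ofReal_le_ofReal (by linarith)))
    refine ht.trans ?_
    exact Set.iUnion₂_mono fun x _ => Metric.ball_subset_closedBall.trans
      (Metric.closedBall_subset_closedBall (by linarith))
  · let f : E → ℝ := fun y => min (r / 2) (Metric.infDist y K')
    have hf : LipschitzWith 1 f := (Metric.lipschitz_infDist_pt K').const_min _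
    have hf0 : ∀ y, 0 ≤ f y := fun y => le_min (by positivity) Metric.infDist_nonneg
    have hfr : ∀ y, f y ≤ r / 2 := fun y => min_le_left _ _
    have hfi : ∀ n, Integrable f (ν n) := fun n =>
      Integrable.of_bound hf.continuous.aestronglyMeasurable (r / 2) (ae_of_all _ fun y => by
        rw [Real.norm_eq_abs, abs_of_nonneg (hf0 y)]; exact hfr y)
    have h1 := mul_meas_ge_le_integral_of_nonneg (ae_of_all (ν n) hf0) (hfi n) (r / 2)
    have hsub : Uᶜ ⊆ {y | r / 2 ≤ f y} := by
      intro y hy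
      show r / 2 ≤ f y
      refine le_min le_rfl ?_
      by_contra hlt
      push Not at hlt
      obtain ⟨z, hz, hyz⟩ := (Metric.infDist_lt_iff hK'ne).1 hlt
      obtain ⟨x, hx, hzx⟩ := Set.mem_iUnion₂.1 (ht hz)
      refine hy (Set.mem_iUnion₂.2 ⟨x, hx, ?_⟩)
      rw [Metric.mem_ball] at hzx
      rw [Metric.mem_closedBall]
      linarith [dist_triangle y z x]
    have h2 : (ν n).real Uᶜ ≤ (ν n).real {y | r / 2 ≤ f y} := measureReal_mono hsub
    have h3 : ∫ y, f y ∂(ν N) ≤ (ν N).real K'ᶜ * (r / 2) := by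
      have : ∫ y, K'ᶜ.indicator (fun _ => r / 2) y ∂(ν N) = (ν N).real K'ᶜ * (r / 2) := by
        rw [integral_indicator_const _ hK'.isClosed.measurableSet.compl]; rfl
      rw [← this]
      refine integral_mono (hfi N) ((integrable_const _).indicator
        hK'.isClosed.measurableSet.compl) fun y => ?_
      by_cases hy : y ∈ K'
      · simp [f, hy, Metric.infDist_zero_of_mem hy]
      · simp [f, hy]
    have h4 : (ν N).real K'ᶜ ≤ ε / 2 :=
      ENNReal.toReal_le_of_le_ofReal (by positivity) (hK'n N le_rfl)
    have h5 := (abs_le.1 (hN n hn f hf)).1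
    have h6 : r / 2 * (ν n).real Uᶜ ≤ r / 2 * ε := by
      have a := mul_le_mul_of_nonneg_left h2 (by positivity : 0 ≤ r / 2)
      have b := mul_le_mul_of_nonneg_right h4 (by positivity : 0 ≤ r / 2)
      linarith
    have h7 : (ν n).real Uᶜ ≤ ε := le_of_mul_le_mul_left h6 (by positivity)
    exact (ENNReal.le_ofReal_iff_toReal_le (measure_ne_top _ _) hε.le).2 h7

lemma tight_of_wass {ν : ℕ → Measure E} [hp : ∀ n, IsProbabilityMeasure (ν n)]
    (hc : ∀ ε > 0, ∃ N, ∀ n ≥ N, ∀ f : E → ℝ, LipschitzWith 1 f →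
      |∫ x, f x ∂(ν N) - ∫ x, f x ∂(ν n)| ≤ ε) :
    IsTightMeasureSet (Set.range ν) := by
  rw [isTightMeasureSet_iff_exists_isCompact_measure_compl_le]
  intro ε hε
  obtain ⟨ε', hε', hsum⟩ := ENNReal.exists_pos_sum_of_countable' hε.ne' ℕ
  have hex : ∀ m : ℕ, ∃ t : Set E, t.Finite ∧
      ∀ n, ν n (⋃ x ∈ t, Metric.closedBall x (1 / ((m : ℝ) + 1)))ᶜ ≤ ε' m := by
    intro m
    have hfin : ε' m ≠ ⊤ := ((ENNReal.le_tsum m).trans_lt (hsum.trans_le le_top)).ne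
    obtain ⟨t, ht, h⟩ := cover_of_wass (ν := ν) hc (r := 1 / ((m : ℝ) + 1)) (ε := (ε' m).toReal)
      (by positivity) (ENNReal.toReal_pos (hε' m).ne' hfin)
    refine ⟨t, ht, fun n => (h n).trans ?_⟩
    rw [ENNReal.ofReal_toReal hfin]
  choose t ht hν using hex
  refine ⟨⋂ m, ⋃ x ∈ t m, Metric.closedBall x (1 / ((m : ℝ) + 1)), ?_, ?_⟩
  · refine TotallyBounded.isCompact_of_isClosed ?_ ?_
    · refine Metric.totallyBounded_iff.2 fun δ hδ => ?_
      obtain ⟨m, hm⟩ := exists_nat_one_div_lt hδ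
      refine ⟨t m, ht m, (Set.iInter_subset _ m).trans ?_⟩
      exact Set.iUnion₂_mono fun x _ => Metric.closedBall_subset_ball hm
    · exact isClosed_iInter fun m => (ht m).isClosed_biUnion fun _ _ => Metric.isClosed_closedBall
  · rintro _ ⟨n, rfl⟩
    rw [Set.compl_iInter]
    exact (measure_iUnion_le _).trans ((ENNReal.tsum_le_tsum fun m => hν m n).trans hsum.le)

lemma exists_invariant (π : Kernel E E) [IsMarkovKernel π] (h0 : FellerOp π) {γ c : ℝ}
    (hγ : γ ∈ Set.Ioo (0 : ℝ) 1)
    (hH1 : ∀ ν : Measure E, FiniteFirstMoment ν → FiniteFirstMoment (Pmeas π ν))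
    (hH2 : ∀ n : ℕ, 1 ≤ n → ∀ ν₁ ν₂ : Measure E, FiniteFirstMoment ν₁ →
      FiniteFirstMoment ν₂ →
      wassDist ((Pmeas π)^[n] ν₁) ((Pmeas π)^[n] ν₂) ≤ c * γ ^ n * wassDist ν₁ ν₂)
    (μ : Measure E) (hμ : FiniteFirstMoment μ) :
    ∃ ρ : Measure E, FiniteFirstMoment ρ ∧ Pmeas π ρ = ρ := by
  have hpμ := hμ.1
  obtain ⟨hγ0, hγ1⟩ := hγ
  set ν : ℕ → Measure E := fun n => (Pmeas π)^[n] μ with hνdef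
  have hνf : ∀ n, FiniteFirstMoment (ν n) := fun n => ffm_iter hH1 hμ n
  have hνp : ∀ n, IsProbabilityMeasure (ν n) := fun n => (hνf n).1
  set W := wassDist μ (Pmeas π μ)
  have hW : 0 ≤ W := wass_nonneg _ _
  set C := max c 1 * W with hC
  have hC0 : 0 ≤ C := mul_nonneg (le_max_of_le_right zero_le_one) hW
  have hstep : ∀ n (f : E → ℝ), LipschitzWith 1 f →
      |∫ x, f x ∂(ν n) - ∫ x, f x ∂(ν (n + 1))| ≤ C * γ ^ n := by
    intro n f hf
    refine (wass_ge (hνf n) (hνf (n + 1)) hf).trans ?_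
    have e : ν (n + 1) = (Pmeas π)^[n] (Pmeas π μ) := Function.iterate_succ_apply _ _ _
    rw [e]
    rcases Nat.eq_zero_or_pos n with rfl | hn
    · simp only [hνdef, Function.iterate_zero, id, pow_zero, mul_one, hC]
      exact le_mul_of_one_le_left hW (le_max_right _ _)
    · refine (hH2 n hn _ _ hμ (hH1 _ hμ)).trans ?_
      have : c * γ ^ n * W ≤ max c 1 * γ ^ n * W := by
        gcongr; exact le_max_left _ _
      calc _ ≤ _ := this
        _ = C * γ ^ n := by rw [hC]; ring
  set B := C / (1 - γ) with hB
  have h1γ : 0 < 1 - γ := by linarith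
  have hB0 : 0 ≤ B := div_nonneg hC0 h1γ.le
  have hCB : C = B * (1 - γ) := by rw [hB]; field_simp
  have hdiff : ∀ n k (f : E → ℝ), LipschitzWith 1 f →
      |∫ x, f x ∂(ν n) - ∫ x, f x ∂(ν (n + k))| ≤ B * γ ^ n := by
    intro n k f hf
    have : |∫ x, f x ∂(ν n) - ∫ x, f x ∂(ν (n + k))| ≤ B * γ ^ n * (1 - γ ^ k) := by
      induction k with
      | zero => simp
      | succ k ih =>
        have h1 := hstep (n + k) f hf
        have h2 := abs_sub_le (∫ x, f x ∂(ν n)) (∫ x, f x ∂(ν (n + k)))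
          (∫ x, f x ∂(ν (n + (k + 1))))
        refine h2.trans ((add_le_add ih h1).trans (le_of_eq ?_))
        rw [hCB]; ring
    refine this.trans ?_
    have h3 : 0 ≤ γ ^ k := by positivity
    have h4 : 0 ≤ B * γ ^ n := by positivity
    nlinarith
  have hpow : Tendsto (fun n : ℕ => B * γ ^ n) atTop (𝓝 0) := by
    simpa using (tendsto_pow_atTop_nhds_zero_of_lt_one hγ0.le hγ1).const_mul B
  have htight : IsTightMeasureSet (Set.range ν) := by
    refine tight_of_wass fun ε hε => ?_
    obtain ⟨N, hN⟩ := (hpow.eventually_le_const hε).exists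
    refine ⟨N, fun n hn f hf => ?_⟩
    obtain ⟨k, rfl⟩ := Nat.exists_eq_add_of_le hn
    exact (hdiff N k f hf).trans hN
  let νP : ℕ → ProbabilityMeasure E := fun n => ⟨ν n, hνp n⟩
  have hcomp : IsCompact (closure (Set.range νP)) := by
    refine isCompact_closure_of_isTightMeasureSet (htight.subset ?_)
    rintro _ ⟨_, ⟨n, rfl⟩, rfl⟩
    exact ⟨n, rfl⟩
  obtain ⟨ρ, -, φ, hφ, hlim⟩ := hcomp.isSeqCompact (x := νP)
    (fun n => subset_closure ⟨n, rfl⟩)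
  have hgint : ∀ g : E →ᵇ ℝ, Tendsto (fun j => ∫ x, g x ∂(ν (φ j))) atTop
      (𝓝 (∫ x, g x ∂(ρ : Measure E))) := fun g =>
    ProbabilityMeasure.tendsto_iff_forall_integral_tendsto.1 hlim g
  refine ⟨ρ, ⟨inferInstance, ?_⟩, ?_⟩
  · obtain ⟨x₀, hx₀⟩ := hμ.2
    set M := ∫ x, dist x₀ x ∂μ + B
    refine ⟨x₀, (by fun_prop : Continuous fun y => dist x₀ y).aestronglyMeasurable, ?_⟩
    let h : ℕ → E → ℝ := fun k x => min (dist x₀ x) k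
    have hlip : ∀ k, LipschitzWith 1 (h k) := fun k => (LipschitzWith.dist_right x₀).min_const _
    have hnn : ∀ k x, 0 ≤ h k x := fun k x => le_min dist_nonneg (Nat.cast_nonneg k)
    have hle : ∀ k x, h k x ≤ k := fun k x => min_le_right _ _
    let hb : ℕ → (E →ᵇ ℝ) := fun k => BoundedContinuousFunction.ofNormedAddCommGroup (h k)
      (hlip k).continuous k (fun x => by rw [Real.norm_eq_abs, abs_of_nonneg (hnn k x)]; exact hle k x)
    have hbound : ∀ k, ∫ x, h k x ∂(ρ : Measure E) ≤ M := by
      intro k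
      refine le_of_tendsto' (hgint (hb k)) fun j => ?_
      have h1 := (abs_le.1 (hdiff 0 (φ j) (h k) (hlip k))).1
      simp only [zero_add, pow_zero, mul_one] at h1
      have h2 : ∫ x, h k x ∂(ν 0) ≤ ∫ x, dist x₀ x ∂μ :=
        integral_mono (ffm_lip_integrable hμ (hlip k)) hx₀ fun x => min_le_left _ _
      change ∫ x, h k x ∂(ν (φ j)) ≤ M
      linarith
    have hl : ∀ x, ENNReal.ofReal (dist x₀ x) =
        liminf (fun k => ENNReal.ofReal (h k x)) atTop := by
      intro x
      symm
      refine Tendsto.liminf_eq (tendsto_const_nhds.congr' ?_)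
      obtain ⟨K, hK⟩ := exists_nat_ge (dist x₀ x)
      filter_upwards [eventually_ge_atTop K] with k hk
      have : dist x₀ x ≤ k := hK.trans (by exact_mod_cast hk)
      simp [h, min_eq_left this]
    rw [hasFiniteIntegral_iff_ofReal (ae_of_all _ fun x => dist_nonneg)]
    calc ∫⁻ x, ENNReal.ofReal (dist x₀ x) ∂(ρ : Measure E)
        = ∫⁻ x, liminf (fun k => ENNReal.ofReal (h k x)) atTop ∂(ρ : Measure E) := by
          simp only [hl]
      _ ≤ liminf (fun k => ∫⁻ x, ENNReal.ofReal (h k x) ∂(ρ : Measure E)) atTop :=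
          lintegral_liminf_le fun k => (hlip k).continuous.measurable.ennreal_ofReal
      _ ≤ liminf (fun _ : ℕ => ENNReal.ofReal M) atTop := by
          refine liminf_le_liminf (Eventually.of_forall fun k => ?_)
          have hki : Integrable (h k) (ρ : Measure E) := (hb k).integrable _
          rw [← ofReal_integral_eq_lintegral_ofReal hki (ae_of_all _ (hnn k))]
          exact ENNReal.ofReal_le_ofReal (hbound k)
      _ < ⊤ := by simp
  · let ρ' : ProbabilityMeasure E := ⟨Pmeas π ρ, inferInstance⟩
    suffices hs : Tendsto (νP ∘ φ) atTop (𝓝 ρ') by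
      have := tendsto_nhds_unique hs hlim
      exact congrArg (fun m : ProbabilityMeasure E => (m : Measure E)) this
    rw [tendsto_iff_forall_lipschitz_integral_tendsto]
    rintro f ⟨D, hD⟩ ⟨L, hL⟩
    let fb : E →ᵇ ℝ := BoundedContinuousFunction.mkOfBound ⟨f, hL.continuous⟩ D hD
    have a1 : Tendsto (fun j => ∫ x, f x ∂(ν (φ j + 1))) atTop (𝓝 (∫ x, f x ∂(Pmeas π ρ))) := by
      have := hgint (PB π h0 fb)
      rw [← integral_Pmeas] at this
      refine this.congr fun j => ?_
      rw [← integral_Pmeas, ← Function.iterate_succ_apply' (Pmeas π)]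
      rfl
    have a2 := lip_tendsto_of_wass (ν := fun j => ν (φ j)) (ρ := fun j => ν (φ j + 1))
      (hpow.comp hφ.tendsto_atTop) (fun j f hf => hdiff (φ j) 1 f hf) hL
    have a3 := a2.add a1
    have a4 : Tendsto (fun j => ∫ x, f x ∂(ν (φ j))) atTop (𝓝 (∫ x, f x ∂(Pmeas π ρ))) := by
      simpa using a3
    exact a4

lemma tendsto_bcf_of_lip (m : ℕ → Measure E) (hp : ∀ n, IsProbabilityMeasure (m n))
    (ρ : Measure E) (hρp : IsProbabilityMeasure ρ)
    (H : ∀ (f : E → ℝ) (L : NNReal), LipschitzWith L f →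
      Tendsto (fun n => ∫ y, f y ∂(m n)) atTop (𝓝 (∫ y, f y ∂ρ))) (g : E →ᵇ ℝ) :
    Tendsto (fun n => ∫ y, g y ∂(m n)) atTop (𝓝 (∫ y, g y ∂ρ)) := by
  let νP : ℕ → ProbabilityMeasure E := fun n => ⟨m n, hp n⟩
  let ρP : ProbabilityMeasure E := ⟨ρ, hρp⟩
  suffices hs : Tendsto νP atTop (𝓝 ρP) from
    ProbabilityMeasure.tendsto_iff_forall_integral_tendsto.1 hs g
  rw [tendsto_iff_forall_lipschitz_integral_tendsto]
  rintro f - ⟨L, hL⟩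
  exact H f L hL

lemma conv_of_invariant (π : Kernel E E) [IsMarkovKernel π] (h0 : FellerOp π) {γ c : ℝ}
    (hγ : γ ∈ Set.Ioo (0 : ℝ) 1)
    (hH1 : ∀ ν : Measure E, FiniteFirstMoment ν → FiniteFirstMoment (Pmeas π ν))
    (hH2 : ∀ n : ℕ, 1 ≤ n → ∀ ν₁ ν₂ : Measure E, FiniteFirstMoment ν₁ →
      FiniteFirstMoment ν₂ →
      wassDist ((Pmeas π)^[n] ν₁) ((Pmeas π)^[n] ν₂) ≤ c * γ ^ n * wassDist ν₁ ν₂)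
    (ρ : Measure E) (hρ : FiniteFirstMoment ρ) (hinv : Pmeas π ρ = ρ) (g : E →ᵇ ℝ) (x : E) :
    Tendsto (fun n => (PB π h0)^[n] g x) atTop (𝓝 (∫ y, g y ∂ρ)) := by
  have hρp := hρ.1
  have hx := ffm_dirac x
  obtain ⟨m, hm⟩ : ∃ m : ℕ → Measure E, ∀ n, m n = (Pmeas π)^[n] (Measure.dirac x) :=
    ⟨_, fun _ => rfl⟩
  have e : ∀ n, (PB π h0)^[n] g x = ∫ y, g y ∂(m n) := fun n => by
    rw [hm, integral_Pmeas_iter π h0, integral_dirac]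
  have hp : ∀ n, IsProbabilityMeasure (m n) :=
    fun n => by rw [hm]; exact Pmeas_iter_prob π _ n
  have hmf : ∀ n, FiniteFirstMoment (m n) := fun n => by rw [hm]; exact ffm_iter hH1 hx n
  have hmw : ∀ n, wassDist (m (n + 1)) ρ ≤ c * γ ^ (n + 1) * wassDist (Measure.dirac x) ρ := by
    intro n
    have h3 := hH2 (n + 1) (Nat.le_add_left 1 n) _ _ hx hρ
    rw [Function.iterate_fixed hinv, ← hm] at h3
    exact h3
  have hw : Tendsto (fun n : ℕ => c * γ ^ (n + 1) * wassDist (Measure.dirac x) ρ) atTop (𝓝 0) := by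
    have h1 := (tendsto_pow_atTop_nhds_zero_of_lt_one hγ.1.le hγ.2)
    have h2 := (tendsto_add_atTop_iff_nat 1).2 h1
    simpa using (h2.const_mul c).mul_const (wassDist (Measure.dirac x) ρ)
  simp only [e]
  refine tendsto_bcf_of_lip m hp ρ hρp ?_ g
  intro f L hL
  have a := lip_tendsto_of_wass (ν := fun n => m (n + 1)) (ρ := fun _ => ρ) hw
    (fun n f hf => (wass_ge (hmf (n + 1)) hρ hf).trans (hmw n)) hL
  have b : Tendsto (fun n => ∫ y, f y ∂(m (n + 1))) atTop (𝓝 (∫ y, f y ∂ρ)) := by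
    simpa using a.add_const (∫ y, f y ∂ρ)
  exact (tendsto_add_atTop_iff_nat (f := fun n => ∫ y, f y ∂(m n)) 1).1 b

lemma unique_of_conv (π : Kernel E E) [IsMarkovKernel π] (h0 : FellerOp π)
    (ρ : Measure E) [IsProbabilityMeasure ρ]
    (hconv : ∀ (g : E →ᵇ ℝ) (x : E),
      Tendsto (fun n => (PB π h0)^[n] g x) atTop (𝓝 (∫ y, g y ∂ρ)))
    (ν : Measure E) [IsProbabilityMeasure ν] (hν : Pmeas π ν = ν) : ν = ρ := by
  refine ext_of_forall_integral_eq_of_IsFiniteMeasure fun g => ?_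
  have h1 : Tendsto (fun n => ∫ x, (PB π h0)^[n] g x ∂ν) atTop
      (𝓝 (∫ _, (∫ y, g y ∂ρ) ∂ν)) := by
    refine tendsto_integral_of_dominated_convergence (fun _ => ‖g‖) ?_ (integrable_const _) ?_ ?_
    · exact fun n => ((PB π h0)^[n] g).continuous.aestronglyMeasurable
    · exact fun n => ae_of_all _ fun x =>
        (BoundedContinuousFunction.norm_coe_le_norm _ _).trans (PB_iter_norm _ _ _ _)
    · exact ae_of_all _ fun x => hconv g x
  simp only [← integral_Pmeas_iter, Function.iterate_fixed hν] at h1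
  simpa using tendsto_nhds_unique tendsto_const_nhds h1

/-- Under (H0)--(H3) there exists a unique invariant probability measure `μ*`; it is ergodic
(the stationary chain is ergodic for the shift) and has finite first moment. -/
theorem exists_unique_ergodic_invariant_measure
    {E : Type*} [MeasurableSpace E] [MetricSpace E] [CompleteSpace E]
    [SecondCountableTopology E] [BorelSpace E]
    (π : Kernel E E) [IsMarkovKernel π] (γ c : ℝ) (hγ : γ ∈ Set.Ioo (0 : ℝ) 1) (hc : 0 < c)
    -- (H0): the Feller property
    (hH0 : ∀ f : E → ℝ, Continuous f → IsBounded (Set.range f) → Continuous (Pfun π f))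
    -- (H1): `P` preserves `M_{1,1}`
    (hH1 : ∀ ν : MeasureTheory.Measure E, FiniteFirstMoment ν → FiniteFirstMoment (Pmeas π ν))
    -- (H2): spectral gap in the Wasserstein metric
    (hH2 : ∀ n : ℕ, 1 ≤ n → ∀ ν₁ ν₂ : MeasureTheory.Measure E, FiniteFirstMoment ν₁ →
      FiniteFirstMoment ν₂ →
      wassDist ((Pmeas π)^[n] ν₁) ((Pmeas π)^[n] ν₂) ≤ c * γ ^ n * wassDist ν₁ ν₂)
    -- the chain: initial distribution `μ ∈ M_{1,1}` and its law `Pμ` on `E^ℕ`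
    (μ : MeasureTheory.Measure E) (hμ : FiniteFirstMoment μ)
    (Pμ : MeasureTheory.Measure (ℕ → E)) (hPμ : IsMarkovChainLaw π μ Pμ)
    -- (H3): uniformly bounded moments of order `2 + δ`
    (x₀ : E) (δ : ℝ) (hδ : 0 < δ)
    (hH3int : ∀ n : ℕ, Integrable (fun ω : ℕ → E => dist x₀ (ω n) ^ (2 + δ)) Pμ)
    (hH3 : ∃ M : ℝ, ∀ n : ℕ, ∫ ω : ℕ → E, dist x₀ (ω n) ^ (2 + δ) ∂Pμ ≤ M) :
    ∃ μstar : MeasureTheory.Measure E,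
      IsProbabilityMeasure μstar ∧ Pmeas π μstar = μstar ∧
      FiniteFirstMoment μstar ∧
      (∀ ν : MeasureTheory.Measure E, IsProbabilityMeasure ν → Pmeas π ν = ν → ν = μstar) ∧
      ∀ Pstar : MeasureTheory.Measure (ℕ → E), IsMarkovChainLaw π μstar Pstar →
        Ergodic (fun (ω : ℕ → E) (n : ℕ) => ω (n + 1)) Pstar := by
  obtain ⟨ρ, hρ, hinv⟩ := exists_invariant π hH0 hγ hH1 hH2 μ hμ
  have hρp := hρ.1
  have hconv := conv_of_invariant π hH0 hγ hH1 hH2 ρ hρ hinv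
  refine ⟨ρ, hρp, hinv, hρ, fun ν hν hνi => unique_of_conv π hH0 ρ hconv ν hνi, fun P hP => ?_⟩
  exact ergodic_aux hH0 hP hinv hconv
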